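/- Let L be a finitely generated free ℤ-module and σ : L → L an involution (σ² = id). Let σ* denote the dual involution on L* = Hom(L, ℤ) defined by (σ*φ)(x) = φ(σx). Set H(L,σ) = ker(id - σ)/im(id + σ). Then H(L,σ) and H(L*, σ*) are finite groups of the same cardinality (equivalently, isomorphic finite elementary abelian 2-groups). -/

import Mathlib

/-- A pairing of additive groups into `ZMod 2` with left kernel `R` and killing `R'` bounds the
size of the quotient by `R`. -/
theorem tate_aux_card_le {K K' : Type*} [AddCommGroup K] [AddCommGroup K']
    (R : AddSubgroup K) (R' : AddSubgroup K') (p : K →+ K' →+ ZMod 2)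
    (h1 : ∀ k, k ∈ R ↔ ∀ k', p k k' = 0) (h2 : ∀ k' ∈ R', ∀ k, p k k' = 0)
    [Finite (K' ⧸ R')] : Nat.card (K ⧸ R) ≤ Nat.card (K' ⧸ R') := by
  classical
  let g : K ⧸ R → AddChar (K' ⧸ R') ℂ := fun a =>
    (ZMod.stdAddChar (N := 2)).compAddMonoidHom
      (QuotientAddGroup.lift R' (p a.out) (fun k' hk' => h2 k' hk' _))
  have hg : Function.Injective g := by
    intro a b hab
    have key : ∀ k', p a.out k' = p b.out k' := by
      intro k'
      have := DFunLike.congr_fun hab (QuotientAddGroup.mk k')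
      exact ZMod.injective_stdAddChar this
    have : -a.out + b.out ∈ R := by
      rw [h1]
      intro k'
      rw [map_add, map_neg, AddMonoidHom.add_apply, AddMonoidHom.neg_apply, key, neg_add_cancel]
    rw [← QuotientAddGroup.eq] at this
    simpa using this
  have := Fintype.ofFinite (K' ⧸ R')
  calc Nat.card (K ⧸ R) ≤ Nat.card (AddChar (K' ⧸ R') ℂ) := Nat.card_le_card_of_injective g hg
    _ = Nat.card (K' ⧸ R') := by
      rw [Nat.card_eq_fintype_card, Nat.card_eq_fintype_card, AddChar.card_eq]

/-- An element of a free module on which all functionals are even is divisible by two. -/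
theorem tate_aux_div {A N : Type*} [CommRing A] [AddCommGroup N] [Module A N] [Module.Free A N]
    [Module.Finite A N] (x : N) (h : ∀ φ : Module.Dual A N, (2 : A) ∣ φ x) :
    ∃ y, x = y + y := by
  let b := Module.Free.chooseBasis A N
  choose c hc using fun i => h (b.coord i)
  refine ⟨∑ i, c i • b i, ?_⟩
  conv_lhs => rw [← b.sum_repr x]
  rw [← Finset.sum_add_distrib]
  refine Finset.sum_congr rfl fun i _ => ?_
  have := hc i
  rw [Module.Basis.coord_apply] at this
  rw [this, ← add_smul, two_mul]

theorem tate_aux_finite {L : Type*} [AddCommGroup L]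
    [Module ℤ L] [Module.Finite ℤ L] (σ : L →ₗ[ℤ] L) :
    Finite ((LinearMap.ker ((LinearMap.id : L →ₗ[ℤ] L) - σ)).toAddSubgroup ⧸
        (LinearMap.range ((LinearMap.id : L →ₗ[ℤ] L) + σ)).toAddSubgroup.addSubgroupOf
          (LinearMap.ker ((LinearMap.id : L →ₗ[ℤ] L) - σ)).toAddSubgroup) := by
  rename_i i1 i2 i3
  obtain rfl : i2 = AddCommGroup.toIntModule L := Subsingleton.elim _ _
  set K := LinearMap.ker ((LinearMap.id : L →ₗ[ℤ] L) - σ) with hK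
  set R := (LinearMap.range ((LinearMap.id : L →ₗ[ℤ] L) + σ)).toAddSubgroup.addSubgroupOf
          K.toAddSubgroup with hR
  have : Module.Finite ℤ K := inferInstance
  have : Module.Finite ℤ K.toAddSubgroup := this
  have : Module.Finite ℤ (K.toAddSubgroup ⧸ R) :=
    Module.Finite.of_surjective (QuotientAddGroup.mk' R).toIntLinearMap
      (QuotientAddGroup.mk'_surjective R)
  apply Module.finite_of_fg_torsion
  intro a
  refine ⟨⟨2, by simp⟩, ?_⟩
  induction a using QuotientAddGroup.induction_on with
  | H z =>
    change (2 : ℤ) • (QuotientAddGroup.mk z : K.toAddSubgroup ⧸ R) = 0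
    rw [two_zsmul, ← QuotientAddGroup.mk_add, QuotientAddGroup.eq_zero_iff, hR,
      AddSubgroup.mem_addSubgroupOf]
    refine ⟨z, ?_⟩
    have hz : (z : L) - σ z = 0 := z.2
    simp [← sub_eq_zero.1 hz]

theorem tate_aux_nondeg {A L : Type*} [CommRing A] [IsDomain A]
    [IsPrincipalIdealRing A] (h20 : (2 : A) ≠ 0) [AddCommGroup L]
    [Module A L] [Module.Free A L] [Module.Finite A L]
    (σ : L →ₗ[A] L) (hσ : σ ∘ₗ σ = LinearMap.id) (x : L) (hx : x = σ x)
    (h : ∀ φ : Module.Dual A L, φ = σ.dualMap φ → (2 : A) ∣ φ x) :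
    x ∈ LinearMap.range ((LinearMap.id : L →ₗ[A] L) + σ) := by
  have hs : ∀ z, σ (σ z) = z := fun z => LinearMap.congr_fun hσ z
  obtain ⟨⟨_, y, rfl⟩, hy⟩ := tate_aux_div
    (((LinearMap.id : L →ₗ[A] L) + σ).rangeRestrict x) (fun ψ => by
      apply h (ψ ∘ₗ ((LinearMap.id : L →ₗ[A] L) + σ).rangeRestrict)
      ext z
      simp only [LinearMap.dualMap_apply, LinearMap.comp_apply]
      congr 1
      apply Subtype.ext
      simp [hs, add_comm])
  refine ⟨y, ?_⟩
  have := congrArg Subtype.val hy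
  simp only [LinearMap.codRestrict_apply, LinearMap.rangeRestrict, Submodule.coe_add,
    LinearMap.add_apply, LinearMap.id_apply, ← hx] at this
  have h2 : (2 : A) • x = (2 : A) • (y + σ y) := by rw [two_smul, two_smul, this]
  have : Module.IsTorsionFree A L := inferInstance
  exact (smul_right_injective L h20 h2).symm

theorem tate_aux_nondeg_dual {A L : Type*} [CommRing A] [IsDomain A]
    [IsPrincipalIdealRing A] (h20 : (2 : A) ≠ 0) [AddCommGroup L]
    [Module A L] [Module.Free A L] [Module.Finite A L]
    (σ : L →ₗ[A] L) (hσ : σ ∘ₗ σ = LinearMap.id) (φ : Module.Dual A L) (hφ : φ = σ.dualMap φ)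
    (h : ∀ x : L, x = σ x → (2 : A) ∣ φ x) :
    φ ∈ LinearMap.range ((LinearMap.id : Module.Dual A L →ₗ[A] Module.Dual A L)
      + σ.dualMap) := by
  apply tate_aux_nondeg h20 σ.dualMap _ φ hφ
  · intro Φ hΦ
    obtain ⟨x, rfl⟩ := (Module.evalEquiv A L).surjective Φ
    refine h x ((Module.evalEquiv A L).injective ?_)
    rw [hΦ]
    ext ψ
    rfl
  · rw [LinearMap.dualMap_comp_dualMap, hσ, LinearMap.dualMap_id]

/-- For an involution `σ` of a finitely generated free `ℤ`-module `L`, with dual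
involution `σ*` on `L* = Hom(L, ℤ)` given by `(σ*φ)(x) = φ(σx)`, the Tate
cohomology groups `H(L, σ) = ker(1 - σ)/im(1 + σ)` and `H(L*, σ*)` are finite of
the same cardinality. -/
theorem tate_cohomology_lattice_duality {L : Type*} [AddCommGroup L]
    [Module ℤ L] [Module.Free ℤ L] [Module.Finite ℤ L]
    (σ : L →ₗ[ℤ] L) (hσ : σ ∘ₗ σ = LinearMap.id) :
    Finite ((LinearMap.ker ((LinearMap.id : L →ₗ[ℤ] L) - σ)).toAddSubgroup ⧸
        (LinearMap.range ((LinearMap.id : L →ₗ[ℤ] L) + σ)).toAddSubgroup.addSubgroupOf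
          (LinearMap.ker ((LinearMap.id : L →ₗ[ℤ] L) - σ)).toAddSubgroup) ∧
    Finite ((LinearMap.ker ((LinearMap.id : Module.Dual ℤ L →ₗ[ℤ] Module.Dual ℤ L)
            - σ.dualMap)).toAddSubgroup ⧸
        (LinearMap.range ((LinearMap.id : Module.Dual ℤ L →ₗ[ℤ] Module.Dual ℤ L)
            + σ.dualMap)).toAddSubgroup.addSubgroupOf
          (LinearMap.ker ((LinearMap.id : Module.Dual ℤ L →ₗ[ℤ] Module.Dual ℤ L)
            - σ.dualMap)).toAddSubgroup) ∧
    Nat.card ((LinearMap.ker ((LinearMap.id : L →ₗ[ℤ] L) - σ)).toAddSubgroup ⧸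
        (LinearMap.range ((LinearMap.id : L →ₗ[ℤ] L) + σ)).toAddSubgroup.addSubgroupOf
          (LinearMap.ker ((LinearMap.id : L →ₗ[ℤ] L) - σ)).toAddSubgroup)
      = Nat.card ((LinearMap.ker ((LinearMap.id : Module.Dual ℤ L →ₗ[ℤ] Module.Dual ℤ L)
            - σ.dualMap)).toAddSubgroup ⧸
        (LinearMap.range ((LinearMap.id : Module.Dual ℤ L →ₗ[ℤ] Module.Dual ℤ L)
            + σ.dualMap)).toAddSubgroup.addSubgroupOf
          (LinearMap.ker ((LinearMap.id : Module.Dual ℤ L →ₗ[ℤ] Module.Dual ℤ L)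
            - σ.dualMap)).toAddSubgroup) := by
  have f1 := tate_aux_finite σ
  have f2 := tate_aux_finite σ.dualMap
  refine ⟨f1, f2, ?_⟩
  let p : (LinearMap.ker ((LinearMap.id : L →ₗ[ℤ] L) - σ)).toAddSubgroup →+
      (LinearMap.ker ((LinearMap.id : Module.Dual ℤ L →ₗ[ℤ] Module.Dual ℤ L)
            - σ.dualMap)).toAddSubgroup →+ ZMod 2 :=
    AddMonoidHom.mk' (fun x => AddMonoidHom.mk' (fun φ => ((φ.1 x.1 : ℤ) : ZMod 2))
      (fun a b => by simp)) (fun a b => by ext; simp)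
  have hp : ∀ x φ, p x φ = 0 ↔ (2 : ℤ) ∣ φ.1 x.1 := fun x φ =>
    ZMod.intCast_zmod_eq_zero_iff_dvd _ 2
  have e1 : ∀ x : (LinearMap.ker ((LinearMap.id : L →ₗ[ℤ] L) - σ)).toAddSubgroup,
      x.1 = σ x.1 := fun x => sub_eq_zero.1 x.2
  have e2 : ∀ φ : (LinearMap.ker ((LinearMap.id : Module.Dual ℤ L →ₗ[ℤ] Module.Dual ℤ L)
            - σ.dualMap)).toAddSubgroup, φ.1 = σ.dualMap φ.1 := fun x => sub_eq_zero.1 x.2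
  have a1 : ∀ x, x ∈ (LinearMap.range ((LinearMap.id : L →ₗ[ℤ] L)
        + σ)).toAddSubgroup.addSubgroupOf
          (LinearMap.ker ((LinearMap.id : L →ₗ[ℤ] L) - σ)).toAddSubgroup ↔
      ∀ φ, p x φ = 0 := by
    intro x
    constructor
    · intro hx φ
      obtain ⟨y, hy⟩ := AddSubgroup.mem_addSubgroupOf.1 hx
      rw [hp, ← hy]
      refine ⟨φ.1 y, ?_⟩
      have h3 : φ.1 y = φ.1 (σ y) := LinearMap.congr_fun (e2 φ) y
      rw [LinearMap.add_apply, map_add, LinearMap.id_apply, ← h3, two_mul]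
    · intro h
      refine AddSubgroup.mem_addSubgroupOf.2 (tate_aux_nondeg two_ne_zero σ hσ x.1 (e1 x) ?_)
      intro φ hφ
      exact (hp x ⟨φ, sub_eq_zero.2 hφ⟩).1 (h _)
  have a2 : ∀ φ, φ ∈ (LinearMap.range ((LinearMap.id : Module.Dual ℤ L →ₗ[ℤ] Module.Dual ℤ L)
            + σ.dualMap)).toAddSubgroup.addSubgroupOf
          (LinearMap.ker ((LinearMap.id : Module.Dual ℤ L →ₗ[ℤ] Module.Dual ℤ L)
            - σ.dualMap)).toAddSubgroup ↔
      ∀ x, p.flip φ x = 0 := by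
    intro φ
    constructor
    · intro hx x
      obtain ⟨y, hy⟩ := AddSubgroup.mem_addSubgroupOf.1 hx
      rw [AddMonoidHom.flip_apply, hp, ← hy]
      refine ⟨y x.1, ?_⟩
      rw [LinearMap.add_apply, LinearMap.add_apply, LinearMap.id_apply,
        LinearMap.dualMap_apply, ← e1 x, two_mul]
    · intro h
      refine AddSubgroup.mem_addSubgroupOf.2 (tate_aux_nondeg_dual two_ne_zero σ hσ φ.1 (e2 φ) ?_)
      intro x hx
      exact (hp ⟨x, sub_eq_zero.2 hx⟩ φ).1 (h _)
  exact le_antisymm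
    (tate_aux_card_le _ _ p a1 fun φ hφ x => (a2 φ).1 hφ x)
    (tate_aux_card_le _ _ p.flip a2 fun x hx φ => (a1 x).1 hx φ)
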